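/- arXiv:1406.7229 — 2 statements merged into one kernel-verified Lean document; each statement's English description precedes it below -/
import Mathlib

section
/- For every integer m ≥ 2 and every integer t ≥ 1 there exists a constant C = C(t,m), independent of N, such that for every integer N ≥ 1 and every f : G → ℂ, Σ_{x ∈ G} Σ_{k=0}^{⌊c_m·N⌋} (k+1)^{2t−1} · |Σ_{j=0}^{t} (−1)^j · C(t,j) · (σ_{k−j} * f)(x)|² ≤ C² · Σ_{x ∈ G} |f(x)|², where σ_{k−j} = 0 when k − j < 0 and C(t,j) is the binomial coefficient. -/
open Finset

noncomputable section

/-- Hamming weight on `(ℤ/(m+1)ℤ)^N`. -/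
def hw {m N : ℕ} (y : Fin N → ZMod (m + 1)) : ℕ :=
  (Finset.univ.filter fun i => y i ≠ 0).card

/-- `L¹`-normalized indicator of the sphere of radius `r` (zero if `r < 0` or `r > N`). -/
def sigmaC (m N : ℕ) (r : ℤ) : (Fin N → ZMod (m + 1)) → ℂ := fun x =>
  if (hw x : ℤ) = r then
    ((Finset.univ.filter fun y : Fin N → ZMod (m + 1) => (hw y : ℤ) = r).card : ℂ)⁻¹
  else 0

/-- Convolution on `(ℤ/(m+1)ℤ)^N`. -/
def convC {m N : ℕ} (g f : (Fin N → ZMod (m + 1)) → ℂ) : (Fin N → ZMod (m + 1)) → ℂ :=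
  fun x => ∑ y, g y * f (x - y)

/-!
Every spherical mean is diagonalized by the characters of `G`. On a character with `r` nontrivial
and `s` trivial components the mean of radius `k` acts by the normalized Krawtchouk coefficient
`a (r, s, k)`, the average of `l ^ #(S ∩ R)` over the `k`-element subsets `S` of a set of `r + s`
points, where `R` is a fixed set of `r` of them and `l = -1 / m`. Conditioning `S` on one point
inside it or one point outside it gives `a (r, s, k + 1) - a (r, s, k) = (l - 1) ρ a (r - 1, s, k)`
with `ρ = r / (r + s)`, so each difference in `k` gains a factor `ρ`. Since `|l| ≤ L := 1 / 2`, the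
coefficient at `l` is dominated by the one at `L`, which is nonnegative, decreasing in `r`, and
hence by the same recurrence at most `(1 - (1 - L) ρ) ^ k`. Therefore the `t`-th difference is
`O (ρ ^ t (1 - (1 - L) ρ) ^ k)`, whose square summed against `(k + 1) ^ (2 t - 1)` is bounded
uniformly in `ρ`; Plancherel turns this into the `ℓ²` estimate.
-/

section Krawtchouk

open Polynomial

/-- The coefficient of `X ^ k` in `(1 + l X) ^ r (1 + X) ^ s`. Up to the factor `m ^ k`, its value
at `l = -1 / m` is the `k`-th Krawtchouk polynomial for words of length `r + s` over an alphabet of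
`m + 1` letters, evaluated at `r`. -/
def krawtchoukCoeff (l : ℝ) (r s k : ℕ) : ℝ :=
  ((1 + C l * X) ^ r * (1 + X) ^ s : ℝ[X]).coeff k

/-- The Krawtchouk coefficient normalized to have absolute value at most one for `|l| ≤ 1`. It is
`0` for `k > r + s`, by division by zero. -/
def krawtchouk (l : ℝ) (r s k : ℕ) : ℝ :=
  krawtchoukCoeff l r s k / (r + s).choose k

variable {l L : ℝ} {r s t k : ℕ}

lemma krawtchoukCoeff_zero_right (l : ℝ) (r s : ℕ) : krawtchoukCoeff l r s 0 = 1 := by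
  simp [krawtchoukCoeff, coeff_zero_eq_eval_zero]

lemma krawtchoukCoeff_zero_left (l : ℝ) (s k : ℕ) : krawtchoukCoeff l 0 s k = s.choose k := by
  simp [krawtchoukCoeff, coeff_one_add_X_pow]

lemma krawtchoukCoeff_one (r s k : ℕ) : krawtchoukCoeff 1 r s k = (r + s).choose k := by
  simp [krawtchoukCoeff, ← pow_add, coeff_one_add_X_pow]

lemma krawtchoukCoeff_succ_left (l : ℝ) (r s k : ℕ) :
    krawtchoukCoeff l (r + 1) s (k + 1) =
      krawtchoukCoeff l r s (k + 1) + l * krawtchoukCoeff l r s k := by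
  have expand : ((1 + C l * X) ^ (r + 1) * (1 + X) ^ s : ℝ[X]) =
      (1 + C l * X) ^ r * (1 + X) ^ s + C l * ((1 + C l * X) ^ r * (1 + X) ^ s * X) := by ring
  simp only [krawtchoukCoeff, expand, coeff_add, coeff_C_mul, coeff_mul_X]

lemma krawtchoukCoeff_succ_middle (l : ℝ) (r s k : ℕ) :
    krawtchoukCoeff l r (s + 1) (k + 1) =
      krawtchoukCoeff l r s (k + 1) + krawtchoukCoeff l r s k := by
  have expand : ((1 + C l * X) ^ r * (1 + X) ^ (s + 1) : ℝ[X]) =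
      (1 + C l * X) ^ r * (1 + X) ^ s + (1 + C l * X) ^ r * (1 + X) ^ s * X := by ring
  simp only [krawtchoukCoeff, expand, coeff_add, coeff_mul_X]

-- At `r = 0` or `s = 0` the truncated predecessor only occurs with coefficient zero.
lemma succ_mul_krawtchoukCoeff_succ (l : ℝ) (r s k : ℕ) :
    (k + 1) * krawtchoukCoeff l r s (k + 1) =
      r * l * krawtchoukCoeff l (r - 1) s k + s * krawtchoukCoeff l r (s - 1) k := by
  have derivative_eq : derivative ((1 + C l * X) ^ r * (1 + X) ^ s : ℝ[X]) =
      C (r * l) * ((1 + C l * X) ^ (r - 1) * (1 + X) ^ s) +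
        C (s : ℝ) * ((1 + C l * X) ^ r * (1 + X) ^ (s - 1)) := by
    simp only [derivative_mul, derivative_pow, derivative_add, derivative_one, derivative_C,
      derivative_X, C_mul]
    ring
  have coeff_eq := coeff_derivative ((1 + C l * X) ^ r * (1 + X) ^ s : ℝ[X]) k
  rw [derivative_eq, coeff_add, coeff_C_mul, coeff_C_mul] at coeff_eq
  simp only [krawtchoukCoeff]
  linarith

lemma sub_mul_krawtchoukCoeff (l : ℝ) (r s k : ℕ) :
    (r + s - k) * krawtchoukCoeff l r s k =
      r * krawtchoukCoeff l (r - 1) s k + s * krawtchoukCoeff l r (s - 1) k := by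
  cases k with
  | zero => simp [krawtchoukCoeff_zero_right]
  | succ k =>
    have expand_left : (r : ℝ) * krawtchoukCoeff l r s (k + 1) =
        r * (krawtchoukCoeff l (r - 1) s (k + 1) + l * krawtchoukCoeff l (r - 1) s k) := by
      cases r with
      | zero => simp
      | succ r => rw [krawtchoukCoeff_succ_left, Nat.add_sub_cancel]
    have expand_right : (s : ℝ) * krawtchoukCoeff l r s (k + 1) =
        s * (krawtchoukCoeff l r (s - 1) (k + 1) + krawtchoukCoeff l r (s - 1) k) := by
      cases s with
      | zero => simp
      | succ s => rw [krawtchoukCoeff_succ_middle, Nat.add_sub_cancel]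
    push_cast
    linarith [succ_mul_krawtchoukCoeff_succ l r s k]

lemma abs_krawtchoukCoeff_le (hl : |l| ≤ L) (r s k : ℕ) :
    |krawtchoukCoeff l r s k| ≤ krawtchoukCoeff L r s k := by
  induction k generalizing r s with
  | zero => simp [krawtchoukCoeff_zero_right]
  | succ k ih =>
    have hk : (0 : ℝ) < k + 1 := by positivity
    refine le_of_mul_le_mul_left ?_ hk
    calc (k + 1) * |krawtchoukCoeff l r s (k + 1)|
        = |r * l * krawtchoukCoeff l (r - 1) s k + s * krawtchoukCoeff l r (s - 1) k| := by
          rw [← succ_mul_krawtchoukCoeff_succ, abs_mul, abs_of_pos hk]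
      _ ≤ r * |l| * |krawtchoukCoeff l (r - 1) s k| + s * |krawtchoukCoeff l r (s - 1) k| := by
          refine (abs_add_le _ _).trans_eq ?_
          simp only [abs_mul, Nat.abs_cast]
      _ ≤ r * L * krawtchoukCoeff L (r - 1) s k + s * krawtchoukCoeff L r (s - 1) k := by
          have hL : 0 ≤ L := (abs_nonneg l).trans hl
          gcongr <;> apply ih
      _ = (k + 1) * krawtchoukCoeff L r s (k + 1) := (succ_mul_krawtchoukCoeff_succ L r s k).symm

lemma krawtchoukCoeff_nonneg (hL : 0 ≤ L) (r s k : ℕ) : 0 ≤ krawtchoukCoeff L r s k :=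
  (abs_nonneg _).trans (abs_krawtchoukCoeff_le (abs_of_nonneg hL).le r s k)

lemma abs_krawtchouk_le (hl : |l| ≤ L) (r s k : ℕ) :
    |krawtchouk l r s k| ≤ krawtchouk L r s k := by
  rw [krawtchouk, krawtchouk, abs_div, Nat.abs_cast]
  gcongr
  exact abs_krawtchoukCoeff_le hl r s k

lemma krawtchouk_nonneg (hL : 0 ≤ L) (r s k : ℕ) : 0 ≤ krawtchouk L r s k :=
  div_nonneg (krawtchoukCoeff_nonneg hL r s k) (Nat.cast_nonneg _)

lemma abs_krawtchouk_le_one (hl : |l| ≤ 1) (r s k : ℕ) : |krawtchouk l r s k| ≤ 1 := by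
  refine (abs_krawtchouk_le hl r s k).trans ?_
  rw [krawtchouk, krawtchoukCoeff_one]
  exact div_self_le_one _

lemma krawtchouk_zero_right (l : ℝ) (r s : ℕ) : krawtchouk l r s 0 = 1 := by
  simp [krawtchouk, krawtchoukCoeff_zero_right]

lemma choose_mul_krawtchouk (l : ℝ) (hk : k ≤ r + s) :
    (r + s).choose k * krawtchouk l r s k = krawtchoukCoeff l r s k :=
  mul_div_cancel₀ _ (by exact_mod_cast (Nat.choose_pos hk).ne')

lemma choose_pred_mul_krawtchouk_left (l : ℝ) (hk : k < r + s) :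
    r * ((r + s - 1).choose k * krawtchouk l (r - 1) s k) = r * krawtchoukCoeff l (r - 1) s k := by
  cases r with
  | zero => simp
  | succ r =>
    rw [← choose_mul_krawtchouk l (by omega), show r + 1 + s - 1 = r + 1 - 1 + s by omega]

lemma choose_pred_mul_krawtchouk_right (l : ℝ) (hk : k < r + s) :
    s * ((r + s - 1).choose k * krawtchouk l r (s - 1) k) = s * krawtchoukCoeff l r (s - 1) k := by
  cases s with
  | zero => simp
  | succ s =>
    rw [← choose_mul_krawtchouk l (by omega), show r + (s + 1) - 1 = r + (s + 1 - 1) by omega]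

-- Averages over the choice of a point inside the random `(k + 1)`-set.
lemma mul_krawtchouk_succ (l : ℝ) (hk : k < r + s) :
    (r + s) * krawtchouk l r s (k + 1) =
      r * l * krawtchouk l (r - 1) s k + s * krawtchouk l r (s - 1) k := by
  have choose_ne_zero : ((r + s - 1).choose k : ℝ) ≠ 0 := by
    exact_mod_cast (Nat.choose_pos (by omega)).ne'
  have absorption : (r + s : ℝ) * (r + s - 1).choose k = (r + s).choose (k + 1) * (k + 1) := by
    have := Nat.add_one_mul_choose_eq (r + s - 1) k
    rw [Nat.sub_add_cancel (by omega)] at this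
    exact_mod_cast this
  refine mul_left_cancel₀ choose_ne_zero ?_
  linear_combination krawtchouk l r s (k + 1) * absorption +
    (k + 1) * choose_mul_krawtchouk l (r := r) (s := s) (k := k + 1) hk +
    succ_mul_krawtchoukCoeff_succ l r s k - l * choose_pred_mul_krawtchouk_left l hk -
    choose_pred_mul_krawtchouk_right l hk

-- Averages over the choice of a point outside the random `k`-set.
lemma mul_krawtchouk (l : ℝ) (hk : k < r + s) :
    (r + s) * krawtchouk l r s k =
      r * krawtchouk l (r - 1) s k + s * krawtchouk l r (s - 1) k := by
  have choose_ne_zero : ((r + s - 1).choose k : ℝ) ≠ 0 := by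
    exact_mod_cast (Nat.choose_pos (by omega)).ne'
  have absorption : (r + s : ℝ) * (r + s - 1).choose k = (r + s).choose k * (r + s - k) := by
    have := Nat.choose_mul_succ_eq (r + s - 1) k
    rw [Nat.sub_add_cancel (by omega), mul_comm] at this
    rw [← Nat.cast_add, ← Nat.cast_sub hk.le]
    exact_mod_cast this
  refine mul_left_cancel₀ choose_ne_zero ?_
  linear_combination krawtchouk l r s k * absorption +
    (r + s - k) * choose_mul_krawtchouk l (r := r) (s := s) hk.le +
    sub_mul_krawtchoukCoeff l r s k - choose_pred_mul_krawtchouk_left l hk -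
    choose_pred_mul_krawtchouk_right l hk

lemma krawtchouk_succ_sub (l : ℝ) (hk : k < r + s) :
    krawtchouk l r s (k + 1) - krawtchouk l r s k =
      (l - 1) * (r / (r + s)) * krawtchouk l (r - 1) s k := by
  have length_pos : (0 : ℝ) < r + s := by exact_mod_cast (by omega : 0 < r + s)
  field_simp
  linear_combination mul_krawtchouk_succ l hk - mul_krawtchouk l hk

lemma krawtchouk_exchange_le (hL : 0 ≤ L) (hL1 : L ≤ 1) (r s k : ℕ) :
    krawtchouk L (r + 1) s k ≤ krawtchouk L r (s + 1) k := by
  rw [krawtchouk, krawtchouk, Nat.add_right_comm, add_assoc]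
  gcongr
  cases k with
  | zero => simp [krawtchoukCoeff_zero_right]
  | succ k =>
    rw [krawtchoukCoeff_succ_left, krawtchoukCoeff_succ_middle]
    gcongr
    exact mul_le_of_le_one_left (krawtchoukCoeff_nonneg hL r s k) hL1

lemma mul_krawtchouk_le_exchange (hL : 0 ≤ L) (hL1 : L ≤ 1) (r s k : ℕ) :
    L * krawtchouk L r (s + 1) k ≤ krawtchouk L (r + 1) s k := by
  rw [krawtchouk, krawtchouk, Nat.add_right_comm, add_assoc, ← mul_div_assoc]
  gcongr
  cases k with
  | zero => simpa [krawtchoukCoeff_zero_right] using hL1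
  | succ k =>
    rw [krawtchoukCoeff_succ_left, krawtchoukCoeff_succ_middle, mul_add]
    gcongr
    exact mul_le_of_le_one_left (krawtchoukCoeff_nonneg hL r s (k + 1)) hL1

lemma krawtchouk_succ_left_le (hL : 0 ≤ L) (hL1 : L ≤ 1) (hk : k ≤ r + s) :
    krawtchouk L (r + 1) s k ≤ krawtchouk L r s k := by
  have average := mul_krawtchouk (r := r + 1) (s := s) L (by omega : k < r + 1 + s)
  have exchange : (s : ℝ) * krawtchouk L (r + 1) (s - 1) k ≤ s * krawtchouk L r s k := by
    cases s with
    | zero => simp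
    | succ s =>
      exact mul_le_mul_of_nonneg_left (krawtchouk_exchange_le hL hL1 r s k) (by positivity)
  refine le_of_mul_le_mul_left ?_ (by positivity : (0 : ℝ) < r + 1 + s)
  push_cast [Nat.add_sub_cancel] at average
  linarith

lemma mul_krawtchouk_le_succ_left (hL : 0 ≤ L) (hL1 : L ≤ 1) (hk : k ≤ r + s) :
    L * krawtchouk L r s k ≤ krawtchouk L (r + 1) s k := by
  have average := mul_krawtchouk (r := r + 1) (s := s) L (by omega : k < r + 1 + s)
  have exchange : (s : ℝ) * (L * krawtchouk L r s k) ≤ s * krawtchouk L (r + 1) (s - 1) k := by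
    cases s with
    | zero => simp
    | succ s =>
      exact mul_le_mul_of_nonneg_left (mul_krawtchouk_le_exchange hL hL1 r s k) (by positivity)
  have contract : (r + 1) * (L * krawtchouk L r s k) ≤ (r + 1) * krawtchouk L r s k := by
    gcongr
    exact mul_le_of_le_one_left (krawtchouk_nonneg hL r s k) hL1
  refine le_of_mul_le_mul_left ?_ (by positivity : (0 : ℝ) < r + 1 + s)
  push_cast [Nat.add_sub_cancel] at average
  linarith

lemma pow_mul_krawtchouk_le_add_left (hL : 0 ≤ L) (hL1 : L ≤ 1) (t : ℕ) (hk : k ≤ r + s) :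
    L ^ t * krawtchouk L r s k ≤ krawtchouk L (r + t) s k := by
  induction t with
  | zero => simp
  | succ t ih =>
    calc L ^ (t + 1) * krawtchouk L r s k = L * (L ^ t * krawtchouk L r s k) := by ring
      _ ≤ L * krawtchouk L (r + t) s k := by gcongr
      _ ≤ krawtchouk L (r + (t + 1)) s k := mul_krawtchouk_le_succ_left hL hL1 (by omega)

lemma div_add_natCast_le_one (r s : ℕ) : (r / (r + s) : ℝ) ≤ 1 :=
  div_le_one_of_le₀ (by simp) (by positivity)

lemma krawtchouk_le_pow (hL : 0 ≤ L) (hL1 : L ≤ 1) (hk : k ≤ r + s) :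
    krawtchouk L r s k ≤ (1 - (1 - L) * (r / (r + s))) ^ k := by
  have ratio_nonneg : (0 : ℝ) ≤ r / (r + s) := by positivity
  have base_nonneg : 0 ≤ 1 - (1 - L) * (r / (r + s) : ℝ) :=
    sub_nonneg.2 (mul_le_one₀ (by linarith) ratio_nonneg (div_add_natCast_le_one r s))
  induction k with
  | zero => simp [krawtchouk_zero_right]
  | succ k ih =>
    have le_pred : (r / (r + s) : ℝ) * krawtchouk L r s k ≤
        r / (r + s) * krawtchouk L (r - 1) s k := by
      cases r with
      | zero => simp
      | succ r =>
        exact mul_le_mul_of_nonneg_left (krawtchouk_succ_left_le hL hL1 (by omega)) ratio_nonneg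
    calc krawtchouk L r s (k + 1)
        = krawtchouk L r s k - (1 - L) * (r / (r + s) * krawtchouk L (r - 1) s k) := by
          linear_combination krawtchouk_succ_sub (r := r) (s := s) L (by omega : k < r + s)
      _ ≤ krawtchouk L r s k - (1 - L) * (r / (r + s) * krawtchouk L r s k) := by
          gcongr
      _ = (1 - (1 - L) * (r / (r + s))) * krawtchouk L r s k := by ring
      _ ≤ (1 - (1 - L) * (r / (r + s))) ^ (k + 1) := by
          rw [pow_succ']
          gcongr
          exact ih (by omega)

lemma fwdDiff_iter_krawtchouk (l : ℝ) (hk : k + t ≤ r + s) :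
    (fwdDiff 1)^[t] (krawtchouk l r s) k =
      (l - 1) ^ t * (r.descFactorial t / (r + s).descFactorial t) * krawtchouk l (r - t) s k := by
  induction t generalizing k with
  | zero => simp
  | succ t ih =>
    rw [Function.iterate_succ_apply', fwdDiff, ih (by omega), ih (by omega), ← mul_sub]
    rcases lt_or_ge r t with hrt | htr
    · simp [Nat.descFactorial_of_lt hrt]
    · have length_eq : ((r - t : ℕ) + s : ℝ) = ((r + s - t : ℕ) : ℝ) := by
        rw [Nat.sub_add_comm htr, Nat.cast_add]
      rw [krawtchouk_succ_sub l (by omega), Nat.descFactorial_succ, Nat.descFactorial_succ,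
        Nat.sub_sub, length_eq, Nat.cast_mul, Nat.cast_mul, mul_div_mul_comm]
      ring

lemma descFactorial_div_descFactorial_le_pow (ht : t ≤ r + s) :
    (r.descFactorial t / (r + s).descFactorial t : ℝ) ≤ (r / (r + s)) ^ t := by
  induction t with
  | zero => simp
  | succ t ih =>
    have factor_le : ((r - t : ℕ) / (r + s - t : ℕ) : ℝ) ≤ r / (r + s) := by
      have length_pos : (0 : ℝ) < r + s := by exact_mod_cast (by omega : 0 < r + s)
      rw [div_le_div_iff₀ (by exact_mod_cast (by omega : 0 < r + s - t)) length_pos]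
      have : (r - t) * (r + s) ≤ r * (r + s - t) := by
        rw [Nat.sub_mul, Nat.mul_sub, mul_comm r t]
        exact Nat.sub_le_sub_left (Nat.mul_le_mul_left t (Nat.le_add_right r s)) _
      exact_mod_cast this
    rw [Nat.descFactorial_succ, Nat.descFactorial_succ, Nat.cast_mul, Nat.cast_mul,
      mul_div_mul_comm, pow_succ']
    exact mul_le_mul factor_le (ih (by omega)) (by positivity) (by positivity)

lemma abs_fwdDiff_iter_krawtchouk_le (hL : 0 < L) (hL1 : L ≤ 1) (hl : |l| ≤ L)
    (hk : k + t ≤ r + s) :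
    |(fwdDiff 1)^[t] (krawtchouk l r s) k| ≤
      (2 / L) ^ t * (r / (r + s)) ^ t * (1 - (1 - L) * (r / (r + s))) ^ k := by
  have decay := krawtchouk_le_pow hL.le hL1 (by omega : k ≤ r + s)
  have base_pow_nonneg := (krawtchouk_nonneg hL.le r s k).trans decay
  rw [fwdDiff_iter_krawtchouk l hk]
  rcases lt_or_ge r t with hrt | htr
  · simp only [Nat.descFactorial_of_lt hrt, Nat.cast_zero, zero_div, mul_zero, zero_mul, abs_zero]
    positivity
  have factor_le : |l - 1| ≤ 2 := by
    rw [abs_le] at hl ⊢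
    constructor <;> linarith
  have shifted_le : |krawtchouk l (r - t) s k| ≤
      (L ^ t)⁻¹ * (1 - (1 - L) * (r / (r + s))) ^ k := by
    rw [le_inv_mul_iff₀ (by positivity)]
    calc L ^ t * |krawtchouk l (r - t) s k| ≤ L ^ t * krawtchouk L (r - t) s k := by
          gcongr
          exact abs_krawtchouk_le hl _ _ _
      _ ≤ krawtchouk L r s k := by
          simpa only [Nat.sub_add_cancel htr] using
            pow_mul_krawtchouk_le_add_left (r := r - t) hL.le hL1 t (by omega)
      _ ≤ _ := decay
  calc |(l - 1) ^ t * (r.descFactorial t / (r + s).descFactorial t) * krawtchouk l (r - t) s k|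
      = |l - 1| ^ t * (r.descFactorial t / (r + s).descFactorial t) *
          |krawtchouk l (r - t) s k| := by
        rw [abs_mul, abs_mul, abs_pow, abs_of_nonneg (by positivity :
          (0 : ℝ) ≤ r.descFactorial t / (r + s).descFactorial t)]
    _ ≤ 2 ^ t * (r / (r + s)) ^ t * ((L ^ t)⁻¹ * (1 - (1 - L) * (r / (r + s))) ^ k) := by
        gcongr
        exact descFactorial_div_descFactorial_le_pow (by omega)
    _ = _ := by rw [div_pow]; ring

end Krawtchouk

section BackwardDiff

variable {t : ℕ} {a : ℕ → ℝ} {B c M ρ : ℝ}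

/-- The `t`-th backward difference of the extension of `a` by zero to negative indices. -/
def backwardDiff (t : ℕ) (a : ℕ → ℝ) (k : ℕ) : ℝ :=
  ∑ j ∈ range (t + 1), (-1) ^ j * t.choose j * if j ≤ k then a (k - j) else 0

lemma backwardDiff_add (t : ℕ) (a : ℕ → ℝ) (k : ℕ) :
    backwardDiff t a (k + t) = (fwdDiff 1)^[t] a k := by
  rw [fwdDiff_iter_eq_sum_shift, backwardDiff, ← sum_flip]
  refine sum_congr rfl fun j hj ↦ ?_
  have hj : j ≤ t := mem_range_succ_iff.1 hj
  rw [if_pos (by omega), Nat.choose_symm hj, show k + t - (t - j) = k + j by omega]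
  simp

lemma abs_backwardDiff_le (ha : ∀ k, |a k| ≤ 1) (t k : ℕ) : |backwardDiff t a k| ≤ 2 ^ t := by
  calc |backwardDiff t a k|
      ≤ ∑ j ∈ range (t + 1), |(-1) ^ j * t.choose j * if j ≤ k then a (k - j) else 0| :=
        abs_sum_le_sum_abs _ _
    _ ≤ ∑ j ∈ range (t + 1), (t.choose j : ℝ) := by
        refine sum_le_sum fun j _ ↦ ?_
        rw [abs_mul, abs_mul, abs_neg_one_pow, one_mul, Nat.abs_cast]
        refine mul_le_of_le_one_right (Nat.cast_nonneg _) ?_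
        split_ifs
        · exact ha _
        · simp
    _ = 2 ^ t := by exact_mod_cast Nat.sum_range_choose t

lemma sum_succ_pow_mul_pow_le (n K : ℕ) {x : ℝ} (hx : 0 ≤ x) (hx1 : x < 1) :
    ∑ k ∈ range K, ((k : ℝ) + 1) ^ n * x ^ k ≤ n.factorial / (1 - x) ^ (n + 1) := by
  have succ_pow_le (k : ℕ) : ((k : ℝ) + 1) ^ n ≤ n.factorial * (k + n).choose n := by
    have := Nat.pow_succ_le_ascFactorial (k + 1) n
    rw [← Nat.add_descFactorial_eq_ascFactorial, Nat.descFactorial_eq_factorial_mul_choose] at this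
    exact_mod_cast this
  calc ∑ k ∈ range K, ((k : ℝ) + 1) ^ n * x ^ k
      ≤ ∑ k ∈ range K, n.factorial * (k + n).choose n * x ^ k := by
        gcongr with k
        exact succ_pow_le k
    _ = n.factorial * ∑ k ∈ range K, (k + n).choose n * x ^ k := by
        simp only [mul_sum, mul_assoc]
    _ ≤ n.factorial * (1 / (1 - x) ^ (n + 1)) := by
        gcongr
        exact sum_le_hasSum _ (fun k _ ↦ by positivity)
          (hasSum_choose_mul_geometric_of_norm_lt_one n (by rwa [Real.norm_of_nonneg hx]))
    _ = n.factorial / (1 - x) ^ (n + 1) := mul_one_div _ _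

lemma pow_mul_sum_succ_pow_mul_pow_le (n K : ℕ) (hc : 0 < c) (hc1 : c ≤ 1) (hρ : 0 ≤ ρ)
    (hρ1 : ρ ≤ 1) :
    ρ ^ (n + 1) * ∑ k ∈ range K, ((k : ℝ) + 1) ^ n * (1 - c * ρ) ^ k ≤
      n.factorial / c ^ (n + 1) := by
  rcases hρ.eq_or_lt with rfl | hρ
  · simp only [zero_pow n.succ_ne_zero, zero_mul]
    positivity
  calc ρ ^ (n + 1) * ∑ k ∈ range K, ((k : ℝ) + 1) ^ n * (1 - c * ρ) ^ k
      ≤ ρ ^ (n + 1) * (n.factorial / (1 - (1 - c * ρ)) ^ (n + 1)) := by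
        gcongr
        exact sum_succ_pow_mul_pow_le n K (sub_nonneg.2 (mul_le_one₀ hc1 hρ.le hρ1))
          (sub_lt_self 1 (by positivity))
    _ = n.factorial / c ^ (n + 1) := by
        rw [sub_sub_cancel, mul_pow]
        field_simp

lemma sum_succ_pow_mul_sq_le_of_abs_le (n : ℕ) (hc : 0 < c) (hc1 : c ≤ 1) (hρ : 0 ≤ ρ)
    (hρ1 : ρ ≤ 1) (ht : 2 * t = n + 1) {K : ℕ}
    (ha : ∀ k < K, |a k| ≤ M * ρ ^ t * (1 - c * ρ) ^ k) :
    ∑ k ∈ range K, ((k : ℝ) + 1) ^ n * a k ^ 2 ≤ M ^ 2 * (n.factorial / c ^ (n + 1)) := by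
  have base_nonneg : 0 ≤ 1 - c * ρ := sub_nonneg.2 (mul_le_one₀ hc1 hρ hρ1)
  have base_le_one : 1 - c * ρ ≤ 1 := sub_le_self 1 (by positivity)
  have sq_le (k : ℕ) (hk : k < K) : a k ^ 2 ≤ M ^ 2 * ρ ^ (n + 1) * (1 - c * ρ) ^ k := by
    calc a k ^ 2 ≤ (M * ρ ^ t * (1 - c * ρ) ^ k) ^ 2 := sq_le_sq' (abs_le.1 (ha k hk)).1
          (abs_le.1 (ha k hk)).2
      _ = M ^ 2 * ρ ^ (n + 1) * ((1 - c * ρ) ^ k) ^ 2 := by rw [← ht]; ring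
      _ ≤ M ^ 2 * ρ ^ (n + 1) * (1 - c * ρ) ^ k := by
          gcongr
          exact pow_le_of_le_one (by positivity) (pow_le_one₀ base_nonneg base_le_one) two_ne_zero
  calc ∑ k ∈ range K, ((k : ℝ) + 1) ^ n * a k ^ 2
      ≤ ∑ k ∈ range K, ((k : ℝ) + 1) ^ n * (M ^ 2 * ρ ^ (n + 1) * (1 - c * ρ) ^ k) := by
        gcongr with k hk
        exact sq_le k (mem_range.1 hk)
    _ = M ^ 2 * (ρ ^ (n + 1) * ∑ k ∈ range K, ((k : ℝ) + 1) ^ n * (1 - c * ρ) ^ k) := by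
        simp only [mul_sum]
        exact sum_congr rfl fun k _ ↦ by ring
    _ ≤ M ^ 2 * (n.factorial / c ^ (n + 1)) := by
        gcongr
        exact pow_mul_sum_succ_pow_mul_pow_le n K hc hc1 hρ hρ1

-- The first `t` terms are split off because there a `t`-th backward difference sees the extension
-- by zero and has no decay.
lemma sum_succ_pow_mul_sq_le_add (n t K : ℕ) (ha : ∀ k, |a k| ≤ B) :
    ∑ k ∈ range K, ((k : ℝ) + 1) ^ n * a k ^ 2 ≤
      (∑ k ∈ range t, ((k : ℝ) + 1) ^ n) * B ^ 2 +
        ((t : ℝ) + 1) ^ n * ∑ k ∈ range (K - t), ((k : ℝ) + 1) ^ n * a (k + t) ^ 2 := by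
  have weight_le (k : ℕ) : (((t + k : ℕ) : ℝ) + 1) ^ n ≤ ((t : ℝ) + 1) ^ n * ((k : ℝ) + 1) ^ n := by
    rw [← mul_pow]
    gcongr
    push_cast
    nlinarith [mul_nonneg (Nat.cast_nonneg (α := ℝ) t) (Nat.cast_nonneg (α := ℝ) k)]
  calc ∑ k ∈ range K, ((k : ℝ) + 1) ^ n * a k ^ 2
      ≤ ∑ k ∈ range (t + (K - t)), ((k : ℝ) + 1) ^ n * a k ^ 2 :=
        sum_le_sum_of_subset_of_nonneg (range_subset_range.2 (by omega)) fun _ _ _ ↦ by positivity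
    _ = ∑ k ∈ range t, ((k : ℝ) + 1) ^ n * a k ^ 2 +
          ∑ k ∈ range (K - t), (((t + k : ℕ) : ℝ) + 1) ^ n * a (t + k) ^ 2 :=
        sum_range_add _ t (K - t)
    _ ≤ ∑ k ∈ range t, ((k : ℝ) + 1) ^ n * B ^ 2 + ∑ k ∈ range (K - t),
          ((t : ℝ) + 1) ^ n * ((k : ℝ) + 1) ^ n * a (t + k) ^ 2 := by
        refine add_le_add (sum_le_sum fun k _ ↦ ?_) (sum_le_sum fun k _ ↦ ?_)
        · exact mul_le_mul_of_nonneg_left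
            (sq_le_sq' (abs_le.1 (ha k)).1 (abs_le.1 (ha k)).2) (by positivity)
        · exact mul_le_mul_of_nonneg_right (weight_le k) (by positivity)
    _ = _ := by simp only [sum_mul, mul_sum, mul_assoc, add_comm t]

end BackwardDiff

lemma exists_sum_sq_backwardDiff_krawtchouk_le {L : ℝ} (hL : 0 < L) (hL1 : L < 1) {t : ℕ}
    (ht : 1 ≤ t) :
    ∃ B, 0 ≤ B ∧ ∀ l, |l| ≤ L → ∀ r s : ℕ, ∑ k ∈ range (r + s + 1),
      ((k : ℝ) + 1) ^ (2 * t - 1) * backwardDiff t (krawtchouk l r s) k ^ 2 ≤ B := by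
  have c_pos : 0 < 1 - L := sub_pos.2 hL1
  refine ⟨(∑ k ∈ range t, ((k : ℝ) + 1) ^ (2 * t - 1)) * (2 ^ t) ^ 2 + ((t : ℝ) + 1) ^ (2 * t - 1) *
    (((2 / L) ^ t) ^ 2 * ((2 * t - 1).factorial / (1 - L) ^ (2 * t - 1 + 1))), by positivity,
    fun l hl r s ↦ ?_⟩
  have bounded := abs_backwardDiff_le (abs_krawtchouk_le_one (hl.trans hL1.le) r s) t
  refine (sum_succ_pow_mul_sq_le_add (2 * t - 1) t _ bounded).trans ?_
  gcongr
  refine sum_succ_pow_mul_sq_le_of_abs_le (t := t) (2 * t - 1) c_pos (by linarith) (by positivity)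
    (div_add_natCast_le_one r s) (by omega) fun k hk ↦ ?_
  rw [backwardDiff_add]
  exact abs_fwdDiff_iter_krawtchouk_le hL hL1.le hl (by omega)

section Plancherel

open RCLike
open scoped ComplexConjugate

variable {G : Type*} [AddCommGroup G] [Fintype G]

lemma sum_norm_sq_sum_mul_addChar (c : AddChar G ℂ → ℂ) :
    ∑ x, ‖∑ ψ, c ψ * ψ x‖ ^ 2 = Fintype.card G * ∑ ψ, ‖c ψ‖ ^ 2 := by
  classical
  have orthogonality (φ ψ : AddChar G ℂ) :
      ∑ x, conj (φ x) * ψ x = if φ = ψ then (Fintype.card G : ℂ) else 0 := by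
    have h := AddChar.wInner_cWeight_eq_boole φ ψ
    rw [wInner_cWeight_eq_expect, Fintype.expect_eq_sum_div_card,
      div_eq_iff (by simp)] at h
    simpa [mul_comm] using h
  suffices (∑ x, ‖∑ ψ, c ψ * ψ x‖ ^ 2 : ℂ) = Fintype.card G * ∑ ψ, (‖c ψ‖ ^ 2 : ℂ) by
    exact_mod_cast this
  calc (∑ x, ‖∑ ψ, c ψ * ψ x‖ ^ 2 : ℂ)
      = ∑ x, ∑ φ, ∑ ψ, conj (c φ) * c ψ * (conj (φ x) * ψ x) := by
        refine sum_congr rfl fun x _ ↦ ?_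
        rw [← Complex.conj_mul', map_sum, sum_mul_sum]
        exact sum_congr rfl fun φ _ ↦ sum_congr rfl fun ψ _ ↦ by rw [map_mul]; ring
    _ = ∑ φ, ∑ ψ, conj (c φ) * c ψ * ∑ x, conj (φ x) * ψ x := by
        simp only [mul_sum]
        rw [sum_comm]
        exact sum_congr rfl fun φ _ ↦ sum_comm
    _ = Fintype.card G * ∑ ψ, (‖c ψ‖ ^ 2 : ℂ) := by
        simp only [orthogonality, mul_ite, mul_zero, sum_ite_eq, mem_univ, if_true,
          Complex.conj_mul', mul_sum]
        exact sum_congr rfl fun ψ _ ↦ mul_comm _ _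

lemma sum_norm_sq_apply_of_diagonal {T : (G → ℂ) →ₗ[ℂ] (G → ℂ)} {μ : AddChar G ℂ → ℂ}
    (hT : ∀ ψ : AddChar G ℂ, T ψ = μ ψ • ⇑ψ) (f : G → ℂ) :
    ∑ x, ‖T f x‖ ^ 2 =
      Fintype.card G * ∑ ψ, ‖μ ψ‖ ^ 2 * ‖(AddChar.complexBasis G).repr f ψ‖ ^ 2 := by
  have expansion : T f = ∑ ψ, (AddChar.complexBasis G).repr f ψ • μ ψ • ⇑ψ := by
    conv_lhs => rw [← (AddChar.complexBasis G).sum_repr f]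
    simp only [map_sum, map_smul, AddChar.complexBasis_apply, hT]
  have plancherel := sum_norm_sq_sum_mul_addChar fun ψ ↦ μ ψ * (AddChar.complexBasis G).repr f ψ
  simp only [norm_mul, mul_pow] at plancherel
  rw [← plancherel, expansion]
  simp only [Finset.sum_apply, Pi.smul_apply, smul_eq_mul, mul_assoc, mul_left_comm]

lemma sum_sum_mul_norm_sq_le_of_diagonal {κ : Type*} {S : Finset κ} {w : κ → ℝ} {B : ℝ}
    {T : κ → (G → ℂ) →ₗ[ℂ] (G → ℂ)} {μ : κ → AddChar G ℂ → ℂ}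
    (hT : ∀ k (ψ : AddChar G ℂ), T k ψ = μ k ψ • ⇑ψ)
    (hB : ∀ ψ, ∑ k ∈ S, w k * ‖μ k ψ‖ ^ 2 ≤ B) (f : G → ℂ) :
    ∑ x, ∑ k ∈ S, w k * ‖T k f x‖ ^ 2 ≤ B * ∑ x, ‖f x‖ ^ 2 := by
  set c := (AddChar.complexBasis G).repr f
  have norm_sq_f : ∑ x, ‖f x‖ ^ 2 = Fintype.card G * ∑ ψ, ‖c ψ‖ ^ 2 := by
    simpa using sum_norm_sq_apply_of_diagonal (T := LinearMap.id) (μ := 1) (by simp) f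
  calc ∑ x, ∑ k ∈ S, w k * ‖T k f x‖ ^ 2
      = ∑ k ∈ S, w k * (Fintype.card G * ∑ ψ, ‖μ k ψ‖ ^ 2 * ‖c ψ‖ ^ 2) := by
        rw [sum_comm]
        simp only [← mul_sum, sum_norm_sq_apply_of_diagonal (hT _), c]
    _ = Fintype.card G * ∑ ψ, (∑ k ∈ S, w k * ‖μ k ψ‖ ^ 2) * ‖c ψ‖ ^ 2 := by
        simp only [mul_sum, sum_mul]
        rw [sum_comm]
        exact sum_congr rfl fun ψ _ ↦ sum_congr rfl fun k _ ↦ by ring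
    _ ≤ Fintype.card G * ∑ ψ, B * ‖c ψ‖ ^ 2 := by
        gcongr with ψ
        exact hB ψ
    _ = B * ∑ x, ‖f x‖ ^ 2 := by
        rw [norm_sq_f, ← mul_sum]
        ring

end Plancherel

section SphericalMean

open Polynomial
open scoped BigOperators

variable {ι A : Type*} [Fintype ι] [AddCommGroup A]

section DualWeight

variable [DecidableEq ι]

/-- The `i`-th component of a character of `ι → A`. -/
def charComponent (ψ : AddChar (ι → A) ℂ) (i : ι) : AddChar A ℂ :=
  ψ.compAddMonoidHom (AddMonoidHom.single (fun _ ↦ A) i)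

open Classical in
/-- The Hamming weight of a character of `ι → A`: the number of its nontrivial components. -/
def charWeight (ψ : AddChar (ι → A) ℂ) : ℕ :=
  hammingNorm (charComponent ψ)

lemma charWeight_zero : charWeight (0 : AddChar (ι → A) ℂ) = 0 := by
  classical
  exact hammingNorm_eq_zero.2 (funext fun i ↦ by ext; simp [charComponent])

lemma charWeight_le_card (ψ : AddChar (ι → A) ℂ) : charWeight ψ ≤ Fintype.card ι := by
  classical
  exact hammingNorm_le_card_fintype

lemma prod_charComponent_apply (ψ : AddChar (ι → A) ℂ) (y : ι → A) :
    ∏ i, charComponent ψ i (y i) = ψ y := by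
  conv_rhs => rw [← univ_sum_single y]
  exact (map_prod ψ.toMonoidHom (fun i ↦ Multiplicative.ofAdd (Pi.single i (y i))) univ).symm

end DualWeight

variable [Fintype A] [DecidableEq A]

lemma sum_C_addChar_mul_ite_X (φ : AddChar A ℂ) [Decidable (φ = 0)] :
    ∑ a, C (φ a) * (if a ≠ 0 then X else 1) =
      if φ = 0 then 1 + C (Fintype.card A - 1 : ℂ) * X else 1 - X := by
  have split_zero (a : A) : C (φ a) * (if a ≠ 0 then X else 1) =
      C (φ a) * X + if a = 0 then 1 - X else 0 := by
    by_cases ha : a = 0 <;> simp [ha]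
  have sum_eq : ∑ a, C (φ a) * (if a ≠ 0 then X else 1) = C (∑ a, φ a) * X + (1 - X) := by
    simp only [split_zero, sum_add_distrib, sum_ite_eq', mem_univ, if_true, map_sum, sum_mul]
  rw [sum_eq, AddChar.sum_eq_ite]
  split_ifs
  · rw [C_sub, C_1]
    ring
  · rw [C_0]
    ring

variable [DecidableEq ι]

lemma sum_C_addChar_mul_X_pow_hammingNorm (ψ : AddChar (ι → A) ℂ) :
    ∑ y, C (ψ y) * X ^ hammingNorm y =
      (1 - X) ^ charWeight ψ *
        (1 + C (Fintype.card A - 1 : ℂ) * X) ^ (Fintype.card ι - charWeight ψ) := by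
  classical
  have factor (y : ι → A) : C (ψ y) * X ^ hammingNorm y =
      ∏ i, C (charComponent ψ i (y i)) * (if y i ≠ 0 then X else 1) := by
    rw [prod_mul_distrib, ← map_prod, prod_charComponent_apply, prod_ite, prod_const,
      prod_const_one, mul_one, hammingNorm]
  have card_trivial :
      #{i | charComponent ψ i = 0} = Fintype.card ι - charWeight ψ := by
    have := card_filter_add_card_filter_not (s := univ) fun i ↦ charComponent ψ i = 0
    rw [charWeight, hammingNorm, ← card_univ, ← this, Nat.add_sub_cancel]
  calc ∑ y, C (ψ y) * X ^ hammingNorm y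
      = ∏ i, ∑ a, C (charComponent ψ i a) * (if a ≠ 0 then X else 1) := by
        simp only [factor, Fintype.prod_sum]
    _ = (1 + C (Fintype.card A - 1 : ℂ) * X) ^ #{i | charComponent ψ i = 0} *
          (1 - X) ^ #{i | charComponent ψ i ≠ 0} := by
        simp only [sum_C_addChar_mul_ite_X, prod_ite, prod_const, ne_eq]
    _ = _ := by rw [card_trivial, mul_comm, charWeight, hammingNorm]

lemma coeff_one_sub_X_pow_mul {q : ℝ} (hq : q ≠ 0) (r s k : ℕ) :
    ((1 - X) ^ r * (1 + C (q : ℂ) * X) ^ s : ℂ[X]).coeff k =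
      (krawtchoukCoeff (-q⁻¹) r s k * q ^ k : ℝ) := by
  have cancel : (C (-q⁻¹) * (C q * X) : ℝ[X]) = -X := by
    rw [← mul_assoc, ← C_mul, neg_mul, inv_mul_cancel₀ hq, C_neg, C_1, neg_one_mul]
  have rescale : ((1 + C (-q⁻¹) * X) ^ r * (1 + X) ^ s : ℝ[X]).comp (C q * X) =
      (1 - X) ^ r * (1 + C q * X) ^ s := by
    simp only [mul_comp, pow_comp, add_comp, one_comp, C_comp, X_comp, cancel, sub_eq_add_neg]
  have map_ofReal : ((1 - X) ^ r * (1 + C (q : ℂ) * X) ^ s : ℂ[X]) =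
      ((1 - X) ^ r * (1 + C q * X) ^ s : ℝ[X]).map Complex.ofRealHom := by
    simp
  rw [map_ofReal, ← rescale, coeff_map, comp_C_mul_X_coeff]
  rfl

lemma sum_sphere_addChar (hA : 1 < Fintype.card A) (ψ : AddChar (ι → A) ℂ) (k : ℕ) :
    ∑ y with hammingNorm y = k, ψ y =
      (krawtchoukCoeff (-(Fintype.card A - 1 : ℝ)⁻¹) (charWeight ψ)
        (Fintype.card ι - charWeight ψ) k * (Fintype.card A - 1) ^ k : ℝ) := by
  have hq : (Fintype.card A - 1 : ℝ) ≠ 0 := sub_ne_zero.2 (by exact_mod_cast hA.ne')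
  have coeff_eq := congrArg (coeff · k) (sum_C_addChar_mul_X_pow_hammingNorm ψ)
  simp only [finsetSum_coeff, coeff_C_mul, coeff_X_pow, mul_ite, mul_one, mul_zero,
    ← sum_filter, eq_comm (a := k)] at coeff_eq
  rw [coeff_eq, ← coeff_one_sub_X_pow_mul hq]
  push_cast
  rfl

lemma card_sphere (hA : 1 < Fintype.card A) (k : ℕ) :
    (#{y : ι → A | hammingNorm y = k} : ℝ) =
      (Fintype.card ι).choose k * (Fintype.card A - 1) ^ k := by
  have := sum_sphere_addChar hA (0 : AddChar (ι → A) ℂ) k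
  simp only [charWeight_zero, krawtchoukCoeff_zero_left, Nat.sub_zero, AddChar.zero_apply,
    sum_const, nsmul_eq_mul, mul_one] at this
  exact_mod_cast this

lemma expect_sphere_addChar (hA : 1 < Fintype.card A) (ψ : AddChar (ι → A) ℂ) (k : ℕ) :
    𝔼 y with hammingNorm y = k, ψ y =
      (krawtchouk (-(Fintype.card A - 1 : ℝ)⁻¹) (charWeight ψ)
        (Fintype.card ι - charWeight ψ) k : ℂ) := by
  have hq : (Fintype.card A - 1 : ℝ) ≠ 0 := sub_ne_zero.2 (by exact_mod_cast hA.ne')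
  have card_eq : (#{y : ι → A | hammingNorm y = k} : ℂ) =
      ((Fintype.card ι).choose k * (Fintype.card A - 1) ^ k : ℝ) := by
    exact_mod_cast card_sphere hA k
  rw [expect_eq_sum_div_card, sum_sphere_addChar hA, card_eq, ← Complex.ofReal_div,
    mul_div_mul_right _ _ (pow_ne_zero k hq), krawtchouk,
    Nat.add_sub_cancel' (charWeight_le_card ψ)]

/-- The averaging operator over the Hamming sphere of radius `r` in `ι → A`, that is, convolution
with the `L¹`-normalized indicator of the sphere. It vanishes when the sphere is empty, in
particular for `r < 0`. -/
def sphericalMean (r : ℤ) : ((ι → A) → ℂ) →ₗ[ℂ] ((ι → A) → ℂ) where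
  toFun f x := 𝔼 y with (hammingNorm y : ℤ) = r, f (x - y)
  map_add' f g := funext fun x ↦ by simp only [Pi.add_apply, expect_add_distrib]
  map_smul' c f := funext fun x ↦ by
    simp only [Pi.smul_apply, smul_eq_mul, RingHom.id_apply, mul_expect]

lemma sphericalMean_apply (r : ℤ) (f : (ι → A) → ℂ) (x : ι → A) :
    sphericalMean r f x = 𝔼 y with (hammingNorm y : ℤ) = r, f (x - y) := rfl

lemma sphericalMean_of_neg {r : ℤ} (hr : r < 0) (f : (ι → A) → ℂ) : sphericalMean r f = 0 := by
  ext x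
  have sphere_empty : ({y : ι → A | (hammingNorm y : ℤ) = r} : Finset (ι → A)) = ∅ :=
    filter_eq_empty_iff.2 fun y _ ↦ by omega
  rw [sphericalMean_apply, sphere_empty, expect_empty, Pi.zero_apply]

lemma sphericalMean_addChar (hA : 1 < Fintype.card A) (k : ℕ) (ψ : AddChar (ι → A) ℂ) :
    sphericalMean k ψ =
      (krawtchouk (-(Fintype.card A - 1 : ℝ)⁻¹) (charWeight ψ)
        (Fintype.card ι - charWeight ψ) k : ℂ) • ⇑ψ := by
  ext x
  have hammingNorm_neg (y : ι → A) : hammingNorm (-y) = hammingNorm y := by simp [hammingNorm]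
  rw [← expect_sphere_addChar hA, sphericalMean_apply, Pi.smul_apply, smul_eq_mul, expect_mul]
  refine expect_equiv (Equiv.neg _) (fun y ↦ by simp [hammingNorm_neg]) fun y _ ↦ ?_
  rw [sub_eq_neg_add, AddChar.map_add_eq_mul, Equiv.neg_apply]

/-- The `t`-th backward difference in `k` of the spherical means of radius `k`. -/
def sphericalMeanDiff (t k : ℕ) : ((ι → A) → ℂ) →ₗ[ℂ] ((ι → A) → ℂ) :=
  ∑ j ∈ range (t + 1), ((-1) ^ j * t.choose j : ℂ) • sphericalMean (k - j : ℤ)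

lemma sphericalMeanDiff_addChar (hA : 1 < Fintype.card A) (t k : ℕ) (ψ : AddChar (ι → A) ℂ) :
    sphericalMeanDiff t k ψ =
      (backwardDiff t (krawtchouk (-(Fintype.card A - 1 : ℝ)⁻¹) (charWeight ψ)
        (Fintype.card ι - charWeight ψ)) k : ℂ) • ⇑ψ := by
  simp only [sphericalMeanDiff, backwardDiff, LinearMap.sum_apply, LinearMap.smul_apply,
    Complex.ofReal_sum, sum_smul]
  refine sum_congr rfl fun j _ ↦ ?_
  split_ifs with hj
  · rw [← Nat.cast_sub hj, sphericalMean_addChar hA, smul_smul]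
    push_cast
    rfl
  · rw [sphericalMean_of_neg (by omega)]
    simp

end SphericalMean

universe u v

theorem statement12_general (t : ℕ) (ht : 1 ≤ t) :
    ∃ C : ℝ, ∀ (ι : Type u) (A : Type v) [Fintype ι] [DecidableEq ι] [AddCommGroup A] [Fintype A]
      [DecidableEq A], 3 ≤ Fintype.card A → ∀ f : (ι → A) → ℂ,
        ∑ x, ∑ k ∈ range (Fintype.card ι + 1),
            ((k : ℝ) + 1) ^ (2 * t - 1) * ‖sphericalMeanDiff t k f x‖ ^ 2 ≤
          C ^ 2 * ∑ x, ‖f x‖ ^ 2 := by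
  obtain ⟨B, hB, sum_le⟩ := exists_sum_sq_backwardDiff_krawtchouk_le (L := 1 / 2) (by norm_num)
    (by norm_num) ht
  refine ⟨√B, fun ι A _ _ _ _ _ hA f ↦ ?_⟩
  rw [Real.sq_sqrt hB]
  refine sum_sum_mul_norm_sq_le_of_diagonal (fun k ψ ↦ sphericalMeanDiff_addChar (by omega) t k ψ)
    (fun ψ ↦ ?_) f
  have abs_le_half : |(-(Fintype.card A - 1 : ℝ)⁻¹)| ≤ 1 / 2 := by
    have : (3 : ℝ) ≤ Fintype.card A := by exact_mod_cast hA
    rw [abs_neg, abs_of_nonneg (inv_nonneg.2 (by linarith)), one_div]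
    exact inv_anti₀ two_pos (by linarith)
  simpa only [Complex.norm_real, Real.norm_eq_abs, sq_abs,
    Nat.add_sub_cancel' (charWeight_le_card ψ)] using
      sum_le _ abs_le_half (charWeight ψ) (Fintype.card ι - charWeight ψ)

lemma convC_sigmaC {m N : ℕ} (r : ℤ) (f : (Fin N → ZMod (m + 1)) → ℂ) :
    convC (sigmaC m N r) f = sphericalMean r f := by
  ext x
  simp only [convC, sigmaC, sphericalMean_apply, expect_eq_sum_div_card, ite_mul, zero_mul,
    ← sum_filter, ← mul_sum, div_eq_inv_mul]
  rfl

theorem statement12 (m : ℕ) (hm : 2 ≤ m) (t : ℕ) (ht : 1 ≤ t) :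
    ∃ C : ℝ, ∀ N : ℕ, 1 ≤ N → ∀ f : (Fin N → ZMod (m + 1)) → ℂ,
      ∑ x, ∑ k ∈ Finset.range ((m * N) / (m + 1) + 1),
          ((k : ℝ) + 1) ^ (2 * t - 1) *
            ‖∑ j ∈ Finset.range (t + 1),
                (-1 : ℂ) ^ j * (t.choose j : ℂ) * convC (sigmaC m N ((k : ℤ) - j)) f x‖ ^ 2 ≤
        C ^ 2 * ∑ x, ‖f x‖ ^ 2 := by
  obtain ⟨C, hC⟩ := statement12_general t ht
  refine ⟨C, fun N _ f ↦ le_trans ?_ (hC (Fin N) (ZMod (m + 1)) (by simpa using hm) f)⟩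
  simp only [sphericalMeanDiff, LinearMap.sum_apply, LinearMap.smul_apply, Finset.sum_apply,
    Pi.smul_apply, smul_eq_mul, convC_sigmaC, Fintype.card_fin]
  gcongr
  exact Nat.div_le_of_le_mul (Nat.mul_le_mul_right N m.le_succ)
end
end

section
/- For every integer k with 0 ≤ k ≤ c_m·N, one has the identity of functions on G: σ_k * σ_N = Σ_{d=0}^{k} b_k(d) · σ_{N−d}, where b_k(d) = m^{−k} · C(k,d) · (m−1)^{k−d}; these coefficients b_k(d) are exactly the probability masses of a sum of k i.i.d. random variables each equal to 1 with probability 1/m and 0 with probability (m−1)/m. -/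
open Finset

noncomputable section

/-- `b_k(d) = m^{-k} C(k,d) (m-1)^{k-d}`: the probability that a sum of `k` i.i.d. random
variables, each `1` with probability `1/m` and `0` with probability `(m-1)/m`, equals `d`. -/
def bCoeff (m k d : ℕ) : ℝ :=
  ((m : ℝ)⁻¹) ^ k * (k.choose d : ℝ) * ((m : ℝ) - 1) ^ (k - d)

/-!
Both sides depend only on the number `e` of zero coordinates of the point `x`. The left side counts
the words of weight `k` that differ from `x` in every coordinate. A zero of `x` allows `m` nonzero
letters, and a nonzero coordinate allows the letter `0` and `m - 1` nonzero ones, so these words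
have weight enumerator `(m X) ^ e * (1 + (m - 1) X) ^ (N - e)`. On the right only the term `d = e`
survives, and the two sides agree by the subset-of-a-subset identity
`N.choose k * k.choose e = N.choose e * (N - e).choose (k - e)`.
-/

open Polynomial

section WeightEnumerator

variable {ι : Type*} [Fintype ι] {β : ι → Type*} [∀ i, DecidableEq (β i)] [∀ i, Zero (β i)]

/-- The weight enumerator of a code: the generating polynomial of the Hamming weights of its words.
Its coefficients count the words of each weight, and it is multiplicative on products. -/
def weightEnumerator (A : Finset (∀ i, β i)) : ℕ[X] :=
  ∑ y ∈ A, X ^ hammingNorm y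

theorem coeff_weightEnumerator (A : Finset (∀ i, β i)) (r : ℕ) :
    (weightEnumerator A).coeff r = #{y ∈ A | hammingNorm y = r} := by
  simp only [weightEnumerator, finsetSum_coeff, coeff_X_pow, card_filter, eq_comm]

theorem pow_hammingNorm {M : Type*} [CommMonoid M] (t : M) (y : ∀ i, β i) :
    t ^ hammingNorm y = ∏ i, if y i = 0 then 1 else t := by
  simp [hammingNorm, prod_ite]

theorem sum_ite_eq_zero_one {α R : Type*} [DecidableEq α] [Zero α] [Semiring R] (s : Finset α)
    (t : R) :
    ∑ a ∈ s, (if a = 0 then 1 else t) = (if 0 ∈ s then 1 else 0) + #(s.erase 0) * t := by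
  rw [sum_ite, filter_eq', filter_ne', sum_const, sum_const]
  split_ifs <;> simp

theorem weightEnumerator_piFinset [DecidableEq ι] (s : ∀ i, Finset (β i)) :
    weightEnumerator (Fintype.piFinset s) =
      ∏ i, ((if 0 ∈ s i then 1 else 0) + C #((s i).erase 0) * X) := by
  have h_factor (i : ι) : (if 0 ∈ s i then 1 else 0) + C #((s i).erase 0) * X =
      ∑ a ∈ s i, (if a = 0 then 1 else X) := by
    rw [sum_ite_eq_zero_one, ← C_eq_natCast, Nat.cast_id]
  simp only [weightEnumerator, pow_hammingNorm, h_factor, prod_univ_sum]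

theorem card_filter_eq_zero (x : ∀ i, β i) :
    #{i | x i = 0} = Fintype.card ι - hammingNorm x := by
  have := card_filter_add_card_filter_not (s := univ) (fun i => x i = 0)
  rw [card_univ] at this
  exact Nat.eq_sub_of_add_eq this

end WeightEnumerator

theorem coeff_one_add_C_mul_X_pow {R : Type*} [CommSemiring R] (c : R) (n k : ℕ) :
    ((1 + C c * X) ^ n).coeff k = n.choose k * c ^ k := by
  have h_comp : (1 + C c * X) ^ n = ((1 + X) ^ n).comp (C c * X) := by simp
  rw [h_comp, comp_C_mul_X_coeff, coeff_one_add_X_pow]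

section Counting

variable {ι α : Type*} [Fintype ι] [DecidableEq ι] [Fintype α] [DecidableEq α] [Zero α]

theorem card_hammingNorm_eq (r : ℕ) :
    #{y : ι → α | hammingNorm y = r} =
      (Fintype.card ι).choose r * (Fintype.card α - 1) ^ r := by
  have h_univ : (univ : Finset (ι → α)) = Fintype.piFinset fun _ => univ := by simp
  rw [h_univ, ← coeff_weightEnumerator, weightEnumerator_piFinset]
  simp only [mem_univ, if_true, card_erase_of_mem, card_univ, prod_const,
    coeff_one_add_C_mul_X_pow, Nat.cast_id]

theorem weightEnumerator_forall_ne (x : ι → α) :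
    weightEnumerator {y : ι → α | ∀ i, y i ≠ x i} =
      (C (Fintype.card α - 1) * X) ^ (Fintype.card ι - hammingNorm x) *
        (1 + C (Fintype.card α - 2) * X) ^ hammingNorm x := by
  have h_pi : ({y | ∀ i, y i ≠ x i} : Finset (ι → α)) =
      Fintype.piFinset fun i => univ.erase (x i) := by
    ext; simp
  have h_factor (b : α) : (if 0 ∈ univ.erase b then 1 else 0) + C #((univ.erase b).erase 0) * X =
      if b = 0 then C (Fintype.card α - 1) * X else 1 + C (Fintype.card α - 2) * X := by
    split_ifs <;> simp_all [card_erase_of_mem, Nat.sub_sub, eq_comm]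
  simp only [h_pi, weightEnumerator_piFinset, h_factor, prod_ite, prod_const, card_filter_eq_zero]
  rfl

theorem card_forall_ne_hammingNorm_eq (x : ι → α) (k : ℕ) :
    #{y : ι → α | (∀ i, y i ≠ x i) ∧ hammingNorm y = k} =
      if Fintype.card ι - hammingNorm x ≤ k then
        (Fintype.card α - 1) ^ (Fintype.card ι - hammingNorm x) *
          ((hammingNorm x).choose (k - (Fintype.card ι - hammingNorm x)) *
            (Fintype.card α - 2) ^ (k - (Fintype.card ι - hammingNorm x)))
      else 0 := by
  rw [← filter_filter, ← coeff_weightEnumerator, weightEnumerator_forall_ne, mul_pow, ← C_pow,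
    mul_assoc, coeff_C_mul, coeff_X_pow_mul', coeff_one_add_C_mul_X_pow, mul_ite, mul_zero,
    Nat.cast_id]

end Counting

section Sphere

variable {m N : ℕ}

theorem hw_eq_hammingNorm (x : Fin N → ZMod (m + 1)) : hw x = hammingNorm x := rfl

theorem hw_le (x : Fin N → ZMod (m + 1)) : hw x ≤ N :=
  hammingNorm_le_card_fintype.trans_eq (Fintype.card_fin N)

theorem hw_sub_eq_iff_forall_ne (x y : Fin N → ZMod (m + 1)) :
    hw (x - y) = N ↔ ∀ i, y i ≠ x i := by
  have := card_filter_eq_iff (s := univ) (p := fun i => (x - y) i ≠ 0)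
  simpa [hw, sub_eq_zero, eq_comm] using this

theorem card_hw_eq (m N r : ℕ) :
    #{y : Fin N → ZMod (m + 1) | hw y = r} = N.choose r * m ^ r := by
  simpa [hw_eq_hammingNorm] using! card_hammingNorm_eq (ι := Fin N) (α := ZMod (m + 1)) r

theorem card_forall_ne_hw_eq (x : Fin N → ZMod (m + 1)) (k : ℕ) :
    #{y : Fin N → ZMod (m + 1) | (∀ i, y i ≠ x i) ∧ hw y = k} =
      if N - hw x ≤ k then
        m ^ (N - hw x) * ((hw x).choose (k - (N - hw x)) * (m - 1) ^ (k - (N - hw x)))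
      else 0 := by
  simpa [hw_eq_hammingNorm] using! card_forall_ne_hammingNorm_eq x k

theorem sigmaC_natCast (r : ℕ) (x : Fin N → ZMod (m + 1)) :
    sigmaC m N r x = if hw x = r then (N.choose r * (m : ℂ) ^ r)⁻¹ else 0 := by
  simp only [sigmaC, Nat.cast_inj, card_hw_eq, Nat.cast_mul, Nat.cast_pow]

theorem sigmaC_sub_natCast (d : ℕ) (x : Fin N → ZMod (m + 1)) :
    sigmaC m N (N - d) x =
      if d = N - hw x then (N.choose (hw x) * (m : ℂ) ^ hw x)⁻¹ else 0 := by
  have h_weight : (hw x : ℤ) = N - d ↔ d = N - hw x := by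
    have := hw_le x
    omega
  split_ifs with hd
  · rw [← h_weight.2 hd, sigmaC_natCast, if_pos rfl]
  · rw [sigmaC, if_neg (h_weight.not.2 hd)]

theorem convC_sigmaC_natCast_self (k : ℕ) (x : Fin N → ZMod (m + 1)) :
    convC (sigmaC m N k) (sigmaC m N N) x =
      #{y : Fin N → ZMod (m + 1) | (∀ i, y i ≠ x i) ∧ hw y = k} *
        ((N.choose k * (m : ℂ) ^ k)⁻¹ * ((m : ℂ) ^ N)⁻¹) := by
  simp only [convC, sigmaC_natCast, hw_sub_eq_iff_forall_ne, ite_zero_mul_ite_zero,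
    Nat.choose_self, Nat.cast_one, one_mul]
  rw [← sum_filter, sum_const, nsmul_eq_mul]
  simp only [and_comm]

theorem sum_range_mul_sigmaC_sub (c : ℕ → ℂ) (k : ℕ) (x : Fin N → ZMod (m + 1)) :
    ∑ d ∈ range (k + 1), c d * sigmaC m N (N - d) x =
      if N - hw x ≤ k then c (N - hw x) * (N.choose (hw x) * (m : ℂ) ^ hw x)⁻¹ else 0 := by
  simp only [sigmaC_sub_natCast, mul_ite, mul_zero, sum_ite_eq', mem_range, Nat.lt_succ_iff]

end Sphere

theorem card_ratio_eq_bCoeff {m N k w : ℕ} (hm : 1 ≤ m) (hk : k ≤ N) (hwN : w ≤ N)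
    (hwk : N - w ≤ k) :
    ((m ^ (N - w) * (w.choose (k - (N - w)) * (m - 1) ^ (k - (N - w))) : ℕ) : ℂ) *
        ((N.choose k * (m : ℂ) ^ k)⁻¹ * ((m : ℂ) ^ N)⁻¹) =
      bCoeff m k (N - w) * (N.choose w * (m : ℂ) ^ w)⁻¹ := by
  have h_choose : (N.choose k : ℂ) * k.choose (N - w) = N.choose w * w.choose (k - (N - w)) := by
    have := Nat.choose_mul (n := N) hwk
    rw [Nat.choose_symm hwN, Nat.sub_sub_self hwN] at this
    exact_mod_cast this
  have h_pow : (m : ℂ) ^ N = m ^ (N - w) * m ^ w := by rw [← pow_add, Nat.sub_add_cancel hwN]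
  have hm₀ : (m : ℂ) ≠ 0 := Nat.cast_ne_zero.2 (by lia)
  have hNk : (N.choose k : ℂ) ≠ 0 := Nat.cast_ne_zero.2 (Nat.choose_pos hk).ne'
  have hNw : (N.choose w : ℂ) ≠ 0 := Nat.cast_ne_zero.2 (Nat.choose_pos hwN).ne'
  rw [h_pow, bCoeff, inv_pow]
  push_cast [Nat.cast_sub hm]
  field_simp
  linear_combination -((m : ℂ) - 1) ^ (k - (N - w)) * h_choose

theorem statement13_general (m N k : ℕ) (hm : 1 ≤ m) (hk : k ≤ N) (x : Fin N → ZMod (m + 1)) :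
    convC (sigmaC m N k) (sigmaC m N N) x =
      ∑ d ∈ range (k + 1), (bCoeff m k d : ℂ) * sigmaC m N (N - d) x := by
  rw [convC_sigmaC_natCast_self, card_forall_ne_hw_eq,
    sum_range_mul_sigmaC_sub (fun d => (bCoeff m k d : ℂ))]
  split_ifs with hwk
  · exact card_ratio_eq_bCoeff hm hk (hw_le x) hwk
  · rw [Nat.cast_zero, zero_mul]

theorem le_of_le_div_add_one_mul {m N k : ℕ} (hk : (k : ℝ) ≤ (m : ℝ) / (m + 1) * N) : k ≤ N := by
  have h_ratio : (m : ℝ) / (m + 1) ≤ 1 := div_le_one_of_le₀ (by linarith) (by positivity)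
  exact_mod_cast hk.trans (mul_le_of_le_one_left N.cast_nonneg h_ratio)

theorem statement13 (m N : ℕ) (hm : 2 ≤ m) (hN : 1 ≤ N) (k : ℕ)
    (hk : (k : ℝ) ≤ (m : ℝ) / (m + 1) * N) :
    ∀ x, convC (sigmaC m N (k : ℤ)) (sigmaC m N (N : ℤ)) x =
      ∑ d ∈ Finset.range (k + 1), (bCoeff m k d : ℂ) * sigmaC m N ((N : ℤ) - d) x :=
  statement13_general m N k (by lia) (le_of_le_div_add_one_mul hk)
end
end
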